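/- arXiv:1704.04717 — 5 statements merged into one kernel-verified Lean document; each statement's English description precedes it below -/
import Mathlib

section
/- Let Γ be a countable discrete group, N a finite normal subgroup of Γ, and μ a generating probability measure on Γ. Then every nonnegative μ-harmonic function on Γ is N-invariant: if f : Γ → [0,∞) satisfies ∑_{h∈Γ} μ(h)·f(h·x) = f(x) for every x ∈ Γ (the sum of nonnegative terms converging), then f(g·x) = f(x) for every g ∈ N and every x ∈ Γ. -/
/-- Convolution of two (signed) measures on a discrete group:
`(μ ∗ ν)(x) = ∑_y μ(y) ν(y⁻¹ x)`. -/
noncomputable def conv {G : Type*} [Group G] (μ ν : G → ℝ) : G → ℝ :=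
  fun x => ∑' y, μ y * ν (y⁻¹ * x)

/-- Convolution powers: `μ^{*0} = δ_e`, `μ^{*(n+1)} = μ^{*n} ∗ μ`. -/
noncomputable def convPow {G : Type*} [Group G] (μ : G → ℝ) : ℕ → G → ℝ
  | 0 => Set.indicator ({1} : Set G) (fun _ => (1 : ℝ))
  | n + 1 => conv (convPow μ n) μ

/-- A measure `μ` is generating if every point gets positive mass from some
convolution power `μ^{*n}`, `n ≥ 1`. -/
def IsGenerating {G : Type*} [Group G] (μ : G → ℝ) : Prop :=
  ∀ x : G, ∃ n : ℕ, 1 ≤ n ∧ 0 < convPow μ n x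

/-!
A nonnegative harmonic function `f` satisfies a Harnack inequality `c * f (g * x) ≤ f x`, with `c`
depending only on `μ` and `g`. Let `F x = ∑ n ∈ N, f (n * x)`; normality of `N` makes `F`
harmonic. Harnack's inequality over the finite group `N` bounds a nonnegative harmonic function
below by a fixed fraction of its average over `N`. Subtracting from `f` that fraction of `F`
leaves a nonnegative harmonic function, to which the same bound applies; iterating, the remainder
decays geometrically and `f ≥ F / |N|` in the limit. So the values of `f` on a coset `N x` are all
at least their mean, hence all equal.
-/

open Filter Function Topology

/-- Harmonicity of `f` for the left random walk with step weights `μ`, whose total mass need not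
be `1`. Convergence of the sums is part of the definition. -/
def IsHarmonic {G : Type*} [Mul G] (μ f : G → ℝ) : Prop :=
  ∀ x, HasSum (fun h => μ h * f (h * x)) (f x)

namespace IsHarmonic

variable {G : Type*} {μ f f' : G → ℝ}

theorem sub [Mul G] (hf : IsHarmonic μ f) (hf' : IsHarmonic μ f') :
    IsHarmonic μ (f - f') :=
  fun x => by simpa only [Pi.sub_apply, mul_sub] using (hf x).sub (hf' x)

theorem const_smul [Mul G] (hf : IsHarmonic μ f) (a : ℝ) : IsHarmonic μ (a • f) :=
  fun x => by simpa only [Pi.smul_apply, smul_eq_mul, mul_left_comm] using (hf x).mul_left a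

theorem mul_apply_mul_le [Mul G] (hμ : ∀ x, 0 ≤ μ x) (hf : IsHarmonic μ f) (hf0 : ∀ x, 0 ≤ f x)
    (g x : G) : μ g * f (g * x) ≤ f x :=
  le_hasSum (hf x) g fun h _ => mul_nonneg (hμ h) (hf0 _)

theorem exists_pos_harnack_const [Monoid G] (hμ : ∀ x, 0 ≤ μ x) {g : G}
    (hg : g ∈ Submonoid.closure (support μ)) :
    ∃ c > 0, ∀ f, IsHarmonic μ f → (∀ x, 0 ≤ f x) → ∀ x, c * f (g * x) ≤ f x := by
  induction hg using Submonoid.closure_induction with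
  | mem g hg =>
    exact ⟨μ g, (hμ g).lt_of_ne' hg, fun f hf hf0 => hf.mul_apply_mul_le hμ hf0 g⟩
  | one => exact ⟨1, one_pos, by simp⟩
  | mul g g' _ _ ih ih' =>
    obtain ⟨c, hc, hle⟩ := ih
    obtain ⟨c', hc', hle'⟩ := ih'
    refine ⟨c' * c, mul_pos hc' hc, fun f hf hf0 x => ?_⟩
    calc c' * c * f (g * g' * x) = c' * (c * f (g * (g' * x))) := by rw [mul_assoc, mul_assoc]
      _ ≤ c' * f (g' * x) := mul_le_mul_of_nonneg_left (hle f hf hf0 _) hc'.le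
      _ ≤ f x := hle' f hf hf0 x

end IsHarmonic

section OrbitSum

variable {G : Type*} [Group G] (N : Subgroup G) [Fintype N]

/-- The sum of a function over the orbits `N x` of left translation by `N`, as a linear operator on
functions. It plays the role of the average over `N`, without the division by `|N|`. -/
def orbitSum : (G → ℝ) →ₗ[ℝ] G → ℝ :=
  ∑ n : N, LinearMap.funLeft ℝ ℝ ((n : G) * ·)

theorem orbitSum_apply (f : G → ℝ) (x : G) : orbitSum N f x = ∑ n : N, f (n * x) := by
  simp [orbitSum, LinearMap.funLeft_apply]

variable {N}

theorem orbitSum_mul_of_mem (f : G → ℝ) {g : G} (hg : g ∈ N) (x : G) :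
    orbitSum N f (g * x) = orbitSum N f x := by
  simp only [orbitSum_apply, ← mul_assoc]
  exact Equiv.sum_comp (Equiv.mulRight (⟨g, hg⟩ : N)) fun n => f (n * x)

theorem orbitSum_orbitSum (f : G → ℝ) :
    orbitSum N (orbitSum N f) = (Fintype.card N : ℝ) • orbitSum N f := by
  ext x
  simp [orbitSum_apply N (orbitSum N f), orbitSum_mul_of_mem]

theorem orbitSum_mul [N.Normal] (f : G → ℝ) (h x : G) :
    orbitSum N f (h * x) = ∑ n : N, f (h * (n * x)) := by
  rw [orbitSum_apply, ← Equiv.sum_comp (MulAut.conjNormal h : MulAut N).toEquiv]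
  simp [mul_assoc]

namespace IsHarmonic

variable {μ f : G → ℝ}

protected theorem orbitSum [N.Normal] (hf : IsHarmonic μ f) : IsHarmonic μ (orbitSum N f) := by
  intro x
  simp only [orbitSum_mul, Finset.mul_sum, orbitSum_apply N f x]
  exact hasSum_sum fun n _ => hf (n * x)

theorem exists_harnack_const_orbitSum (hμ : ∀ x, 0 ≤ μ x)
    (hN : (N : Set G) ⊆ Submonoid.closure (support μ)) :
    ∃ c ∈ Set.Ioc (0 : ℝ) 1, ∀ f, IsHarmonic μ f → (∀ x, 0 ≤ f x) →
      ∀ x, c * orbitSum N f x ≤ Fintype.card N * f x := by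
  choose c hc hle using fun n : N => exists_pos_harnack_const hμ (hN n.2)
  obtain ⟨m, hm⟩ := Finite.exists_min c
  refine ⟨min (c m) 1, ⟨lt_min (hc m) one_pos, min_le_right _ _⟩, fun f hf hf0 x => ?_⟩
  have hterm (n : N) : min (c m) 1 * f (n * x) ≤ f x :=
    (mul_le_mul_of_nonneg_right ((min_le_left _ _).trans (hm n)) (hf0 _)).trans (hle n f hf hf0 x)
  rw [orbitSum_apply, Finset.mul_sum, ← nsmul_eq_mul]
  exact Finset.sum_le_card_nsmul _ _ _ fun n _ => hterm n

theorem one_sub_pow_mul_orbitSum_le [N.Normal] {c : ℝ}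
    (hharnack : ∀ u, IsHarmonic μ u → (∀ x, 0 ≤ u x) →
      ∀ x, c * orbitSum N u x ≤ Fintype.card N * u x)
    (hf : IsHarmonic μ f) (hf0 : ∀ x, 0 ≤ f x) (k : ℕ) (x : G) :
    (1 - (1 - c) ^ k) * orbitSum N f x ≤ Fintype.card N * f x := by
  set F := orbitSum N f with hF
  set M := (Fintype.card N : ℝ) with hM
  have hM0 : 0 < M := Nat.cast_pos.2 Fintype.card_pos
  induction k generalizing x with
  | zero => simpa using mul_nonneg hM0.le (hf0 x)
  | succ k ih =>
    set r := (1 - c) ^ k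
    let u : G → ℝ := M • f - (1 - r) • F
    have hu : IsHarmonic μ u := (hf.const_smul M).sub (hf.orbitSum.const_smul (1 - r))
    have hu0 (y : G) : 0 ≤ u y := sub_nonneg.2 (ih y)
    have hsum : orbitSum N u = (M * r) • F := by
      simp only [u, map_sub, map_smul, hF, orbitSum_orbitSum, ← hM]
      module
    have hle : M * (c * r * F x) ≤ M * (M * f x - (1 - r) * F x) := by
      calc M * (c * r * F x) = c * orbitSum N u x := by
            rw [hsum, Pi.smul_apply, smul_eq_mul]; ring
        _ ≤ M * u x := hharnack u hu hu0 x
    have hdecay : c * r * F x ≤ M * f x - (1 - r) * F x := le_of_mul_le_mul_left hle hM0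
    rw [pow_succ]
    linarith

theorem orbitSum_le_card_mul [N.Normal] (hμ : ∀ x, 0 ≤ μ x)
    (hN : (N : Set G) ⊆ Submonoid.closure (support μ)) (hf : IsHarmonic μ f)
    (hf0 : ∀ x, 0 ≤ f x) (x : G) : orbitSum N f x ≤ Fintype.card N * f x := by
  obtain ⟨c, ⟨hc0, hc1⟩, hharnack⟩ := exists_harnack_const_orbitSum hμ hN
  have hpow : Tendsto (fun k : ℕ => (1 - c) ^ k) atTop (𝓝 0) :=
    tendsto_pow_atTop_nhds_zero_of_lt_one (sub_nonneg.2 hc1) (sub_lt_self 1 hc0)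
  have hlim : Tendsto (fun k : ℕ => (1 - (1 - c) ^ k) * orbitSum N f x) atTop
      (𝓝 (orbitSum N f x)) := by
    simpa using (hpow.const_sub 1).mul_const (orbitSum N f x)
  exact le_of_tendsto' hlim fun k => one_sub_pow_mul_orbitSum_le hharnack hf hf0 k x

theorem card_mul_eq_orbitSum [N.Normal] (hμ : ∀ x, 0 ≤ μ x)
    (hN : (N : Set G) ⊆ Submonoid.closure (support μ)) (hf : IsHarmonic μ f)
    (hf0 : ∀ x, 0 ≤ f x) (x : G) : Fintype.card N * f x = orbitSum N f x := by
  have hle (n : N) : orbitSum N f x ≤ Fintype.card N * f (n * x) :=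
    (orbitSum_mul_of_mem f n.2 x).ge.trans (hf.orbitSum_le_card_mul hμ hN hf0 _)
  have hsum : ∑ _n : N, orbitSum N f x =
      ∑ n : N, (Fintype.card N : ℝ) * f (n * x) := by
    simp [← Finset.mul_sum, ← orbitSum_apply]
  simpa using ((Finset.sum_eq_sum_iff_of_le fun n _ => hle n).1 hsum 1 (Finset.mem_univ 1)).symm

end IsHarmonic

end OrbitSum

theorem nonneg_harmonic_invariant_of_finite_normal_general {G : Type*} [Group G]
    (N : Subgroup G) [N.Normal] [Finite N] {μ : G → ℝ} (hμ : ∀ x, 0 ≤ μ x)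
    (hN : (N : Set G) ⊆ Submonoid.closure (support μ)) {f : G → ℝ} (hf0 : ∀ x, 0 ≤ f x)
    (hf : IsHarmonic μ f) : ∀ g ∈ N, ∀ x, f (g * x) = f x := by
  intro g hg x
  have := Fintype.ofFinite N
  have hcard : (Fintype.card N : ℝ) ≠ 0 := Nat.cast_ne_zero.2 Fintype.card_ne_zero
  refine mul_left_cancel₀ hcard ?_
  rw [hf.card_mul_eq_orbitSum hμ hN hf0, hf.card_mul_eq_orbitSum hμ hN hf0,
    orbitSum_mul_of_mem f hg]

theorem mem_closure_support_of_convPow_ne_zero {G : Type*} [Group G] {μ : G → ℝ} {n : ℕ} {x : G}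
    (hx : convPow μ n x ≠ 0) : x ∈ Submonoid.closure (support μ) := by
  induction n generalizing x with
  | zero => simp [Set.mem_singleton_iff.1 (Set.mem_of_indicator_ne_zero hx)]
  | succ n ih =>
    obtain ⟨y, hy⟩ : ∃ y, convPow μ n y * μ (y⁻¹ * x) ≠ 0 := by
      by_contra! hzero
      exact hx (by simp [convPow, conv, hzero])
    rw [← mul_inv_cancel_left y x]
    exact mul_mem (ih (left_ne_zero_of_mul hy))
      (Submonoid.subset_closure (right_ne_zero_of_mul hy))

theorem IsGenerating.closure_support_eq_top {G : Type*} [Group G] {μ : G → ℝ}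
    (hμ : IsGenerating μ) : Submonoid.closure (support μ) = ⊤ := by
  refine (Submonoid.eq_top_iff' _).2 fun x => ?_
  obtain ⟨n, -, hn⟩ := hμ x
  exact mem_closure_support_of_convPow_ne_zero hn.ne'

/-- Every nonnegative `μ`-harmonic function on a countable discrete group `Γ`
with respect to a generating probability measure `μ` is invariant under a
finite normal subgroup `N`. -/
theorem nonneg_harmonic_invariant_of_finite_normal
    {Γ : Type*} [Group Γ] [Countable Γ]
    (N : Subgroup Γ) [N.Normal] [Finite N]
    (μ : Γ → ℝ) (hμ0 : ∀ x, 0 ≤ μ x) (hμ1 : HasSum μ 1)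
    (hgen : IsGenerating μ)
    (f : Γ → ℝ) (hf0 : ∀ x, 0 ≤ f x)
    (hharm : ∀ x : Γ, HasSum (fun h => μ h * f (h * x)) (f x)) :
    ∀ g ∈ N, ∀ x : Γ, f (g * x) = f x := by
  exact nonneg_harmonic_invariant_of_finite_normal_general N hμ0
    (by simp [hgen.closure_support_eq_top]) hf0 hharm
end

section
/- Let X be a normed vector space, E : X → X a bounded linear projection (E∘E = E), and P₁, P₂ : X → X bounded linear operators such that E commutes with both P₁ and P₂, ‖P₂ x‖ ≤ ‖x‖ for all x ∈ X, and there exists δ > 0 such that ‖P₁ y‖ ≤ (1−δ)·‖y‖ for every y ∈ X with E y = 0. Let 0 < t ≤ 1 and P = t·P₁ + (1−t)·P₂. Then every x ∈ X with P x = x satisfies E x = x. -/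
open Function

theorem isFixedPt_of_isIdempotentElem_of_commute {R M : Type*} [Semiring R] [AddCommGroup M]
    [Module R M] {E P : Module.End R M} (hE : IsIdempotentElem E) (hEP : Commute E P)
    (hker : ∀ y ∈ LinearMap.ker E, IsFixedPt P y → y = 0) {x : M} (hx : IsFixedPt P x) :
    IsFixedPt E x := by
  have hEx : IsFixedPt P (E x) := hx.map (LinearMap.congr_fun hEP)
  have hmem : x - E x ∈ LinearMap.ker E := by
    rw [LinearMap.mem_ker, map_sub, ← Module.End.mul_apply, hE.eq, sub_self]
  have hfix : IsFixedPt P (x - E x) := by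
    rw [IsFixedPt, map_sub, hx.eq, hEx.eq]
  exact (sub_eq_zero.mp (hker _ hmem hfix)).symm

section Seminormed

variable {X : Type*} [SeminormedAddCommGroup X] [NormedSpace ℝ X]

theorem norm_combo_lt_of_norm_lt_of_norm_le {u v : X} {r a b : ℝ} (hu : ‖u‖ < r) (hv : ‖v‖ ≤ r)
    (ha : 0 < a) (hb : 0 ≤ b) (hab : a + b = 1) : ‖a • u + b • v‖ < r :=
  calc
    ‖a • u + b • v‖ ≤ a * ‖u‖ + b * ‖v‖ := by
      simpa only [norm_smul_of_nonneg ha.le, norm_smul_of_nonneg hb]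
        using norm_add_le (a • u) (b • v)
    _ < a * r + b * r :=
      add_lt_add_of_lt_of_le (mul_lt_mul_of_pos_left hu ha) (mul_le_mul_of_nonneg_left hv hb)
    _ = r := by rw [← add_mul, hab, one_mul]

theorem fixedPoint_of_convex_combination_is_invariant_general {E P₁ P₂ : Module.End ℝ X}
    (hE : IsIdempotentElem E) (hEP₁ : Commute E P₁) (hEP₂ : Commute E P₂)
    (hP₁ : ∀ y ∈ LinearMap.ker E, y ≠ 0 → ‖P₁ y‖ < ‖y‖)
    (hP₂ : ∀ y ∈ LinearMap.ker E, ‖P₂ y‖ ≤ ‖y‖)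
    {t : ℝ} (ht0 : 0 < t) (ht1 : t ≤ 1) {x : X} (hx : t • P₁ x + (1 - t) • P₂ x = x) :
    E x = x := by
  have hcomm : Commute E (t • P₁ + (1 - t) • P₂) :=
    (hEP₁.smul_right t).add_right (hEP₂.smul_right (1 - t))
  refine isFixedPt_of_isIdempotentElem_of_commute hE hcomm (fun y hy hfix ↦ ?_) hx
  by_contra hy0
  have hlt : ‖t • P₁ y + (1 - t) • P₂ y‖ < ‖y‖ :=
    norm_combo_lt_of_norm_lt_of_norm_le (hP₁ y hy hy0) (hP₂ y hy) ht0 (sub_nonneg.mpr ht1)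
      (add_sub_cancel t 1)
  exact hlt.ne (congrArg norm hfix)

end Seminormed

/-- Abstract contraction argument: if `E` is a bounded linear projection
commuting with bounded operators `P₁`, `P₂`, where `P₂` is a contraction and
`P₁` is a strict contraction on `ker E`, then every fixed point of the convex
combination `P = t P₁ + (1-t) P₂` (with `0 < t ≤ 1`) lies in the range of `E`,
i.e. satisfies `E x = x`. -/
theorem fixedPoint_of_convex_combination_is_invariant
    {X : Type*} [NormedAddCommGroup X] [NormedSpace ℝ X]
    (E P₁ P₂ : X →L[ℝ] X)
    (hE : E.comp E = E)
    (hEP₁ : E.comp P₁ = P₁.comp E) (hEP₂ : E.comp P₂ = P₂.comp E)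
    (hP₂ : ∀ x : X, ‖P₂ x‖ ≤ ‖x‖)
    (δ : ℝ) (hδ : 0 < δ)
    (hP₁ : ∀ y : X, E y = 0 → ‖P₁ y‖ ≤ (1 - δ) * ‖y‖)
    (t : ℝ) (ht0 : 0 < t) (ht1 : t ≤ 1)
    (x : X) (hx : t • P₁ x + (1 - t) • P₂ x = x) :
    E x = x := by
  have hP₁_lt (y : X) (hy : E y = 0) (hy0 : y ≠ 0) : ‖P₁ y‖ < ‖y‖ :=
    (hP₁ y hy).trans_lt (mul_lt_of_lt_one_left (norm_pos_iff.mpr hy0) (sub_lt_self 1 hδ))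
  exact fixedPoint_of_convex_combination_is_invariant_general
    (congrArg ContinuousLinearMap.toLinearMap hE) (congrArg ContinuousLinearMap.toLinearMap hEP₁)
    (congrArg ContinuousLinearMap.toLinearMap hEP₂) hP₁_lt (fun y _ ↦ hP₂ y) ht0 ht1 hx
end

section
/- Let G be a compact Hausdorff topological group, ν a Borel probability measure on G with full support (every nonempty open subset of G has positive ν-measure), H a nonzero finite-dimensional complex Hilbert space, and U : G → U(H) a continuous unitary representation of G on H that has no nonzero invariant vectors (there is no ξ ≠ 0 with U(g)ξ = ξ for all g ∈ G). Then the operator norm of the average ∫_G U(g) dν(g) is strictly less than 1. -/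
open MeasureTheory

/-!
The mean of a nonconstant continuous function into a strictly convex ball lies strictly inside the
ball when `ν` has full support, so `‖∫ U(g)ξ dν(g)‖ < ‖ξ‖` unless `g ↦ U(g)ξ` is constant;
evaluating at `g = 1`, constancy means that `ξ` is invariant. In finite dimension the norm of the
averaged operator is attained on the unit ball, so these strict inequalities bound the norm itself.
-/

section Operators

variable {𝕜 E F : Type*} [DenselyNormedField 𝕜] [NormedAddCommGroup E] [NormedSpace 𝕜 E]
  [ProperSpace E] [SeminormedAddCommGroup F] [NormedSpace 𝕜 F]

theorem exists_norm_le_one_norm_apply_eq_opNorm (A : E →L[𝕜] F) :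
    ∃ ξ : E, ‖ξ‖ ≤ 1 ∧ ‖A ξ‖ = ‖A‖ := by
  obtain ⟨ξ, hξ, hsup⟩ := (isCompact_closedBall (0 : E) 1).exists_sSup_image_eq
    (Metric.nonempty_closedBall.2 zero_le_one) A.continuous.norm.continuousOn
  exact ⟨ξ, mem_closedBall_zero_iff.1 hξ, hsup ▸ A.sSup_unitClosedBall_eq_norm⟩

theorem opNorm_lt_one_of_norm_apply_lt {A : E →L[𝕜] F} (hA : ∀ ξ ≠ 0, ‖A ξ‖ < ‖ξ‖) :
    ‖A‖ < 1 := by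
  obtain ⟨ξ, hξ, hattain⟩ := exists_norm_le_one_norm_apply_eq_opNorm A
  rw [← hattain]
  rcases eq_or_ne ξ 0 with rfl | hne
  · simp
  · exact (hA ξ hne).trans_le hξ

end Operators

section Averages

variable {X E F : Type*} [TopologicalSpace X] [MeasurableSpace X]
  {ν : Measure X} [ν.IsOpenPosMeasure] [NormedAddCommGroup E] [NormedAddCommGroup F]
  [NormedSpace ℝ F] [StrictConvexSpace ℝ F] [CompleteSpace F]

theorem norm_integral_lt_of_continuous_of_norm_le [IsFiniteMeasure ν] {f : X → F} {C : ℝ}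
    (hf : Continuous f) (hle : ∀ x, ‖f x‖ ≤ C) {x y : X} (hxy : f x ≠ f y) :
    ‖∫ x, f x ∂ν‖ < ν.real Set.univ * C := by
  refine (ae_eq_const_or_norm_integral_lt_of_norm_le_const (.of_forall hle)).resolve_left
    fun hae => hxy ?_
  have hconst := (hf.ae_eq_iff_eq ν continuous_const).1 hae
  exact (congrFun hconst x).trans (congrFun hconst y).symm

theorem norm_integral_lt_one_of_forall_exists_apply_ne [IsProbabilityMeasure ν] {𝕜 : Type*}
    [RCLike 𝕜] [NormedSpace 𝕜 E] [ProperSpace E] [NormedSpace 𝕜 F] [SMulCommClass ℝ 𝕜 F]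
    {T : X → E →L[𝕜] F} (hint : Integrable T ν) (hcont : ∀ ξ, Continuous fun x => T x ξ)
    (hle : ∀ x, ‖T x‖ ≤ 1) (hne : ∀ ξ ≠ 0, ∃ x y, T x ξ ≠ T y ξ) :
    ‖∫ x, T x ∂ν‖ < 1 := by
  refine opNorm_lt_one_of_norm_apply_lt fun ξ hξ => ?_
  obtain ⟨x, y, hxy⟩ := hne ξ hξ
  rw [ContinuousLinearMap.integral_apply hint]
  simpa using norm_integral_lt_of_continuous_of_norm_le (ν := ν) (hcont ξ)
    (fun z => (T z).le_of_opNorm_le (hle z) ξ) hxy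

end Averages

theorem norm_average_lt_one_of_no_invariant_vectors_general
    {M : Type*} [Monoid M] [TopologicalSpace M] [MeasurableSpace M] [OpensMeasurableSpace M]
    (ν : Measure M) [IsProbabilityMeasure ν] [ν.IsOpenPosMeasure]
    {𝕜 E : Type*} [RCLike 𝕜] [NormedAddCommGroup E] [NormedSpace 𝕜 E] [FiniteDimensional 𝕜 E]
    [NormedSpace ℝ E] [SMulCommClass ℝ 𝕜 E] [StrictConvexSpace ℝ E]
    (U : M →* (E →L[𝕜] E)) (hU_le : ∀ m, ‖U m‖ ≤ 1) (hU_cont : Continuous U)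
    (hU_noinv : ∀ ξ : E, (∀ m, U m ξ = ξ) → ξ = 0) :
    ‖∫ m, U m ∂ν‖ < 1 := by
  have : ProperSpace E := FiniteDimensional.proper 𝕜 E
  have : ProperSpace (E →L[𝕜] E) := FiniteDimensional.proper 𝕜 _
  have hint : Integrable U ν := .of_bound hU_cont.aestronglyMeasurable 1 (.of_forall hU_le)
  refine norm_integral_lt_one_of_forall_exists_apply_ne hint
    (fun ξ => hU_cont.clm_apply continuous_const) hU_le fun ξ hξ => ?_
  obtain ⟨m, hm⟩ := not_forall.1 (mt (hU_noinv ξ) hξ)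
  exact ⟨m, 1, by simpa using hm⟩

/-- If `ν` is a fully supported Borel probability measure on a compact group
`G` and `U` is a continuous finite-dimensional unitary representation of `G`
with no nonzero invariant vectors, then `‖∫ U(g) dν(g)‖ < 1`. -/
theorem norm_average_lt_one_of_no_invariant_vectors
    {G : Type*} [Group G] [TopologicalSpace G] [IsTopologicalGroup G]
    [CompactSpace G] [T2Space G] [MeasurableSpace G] [BorelSpace G]
    (ν : Measure G) [IsProbabilityMeasure ν]
    (hν : ∀ s : Set G, IsOpen s → s.Nonempty → 0 < ν s)
    {H : Type*} [NormedAddCommGroup H] [InnerProductSpace ℂ H]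
    [FiniteDimensional ℂ H] [Nontrivial H]
    (U : G →* (H →L[ℂ] H))
    (hU_unitary : ∀ g : G, U g ∈ unitary (H →L[ℂ] H))
    (hU_cont : Continuous fun g : G => U g)
    (hU_noinv : ∀ ξ : H, (∀ g : G, U g ξ = ξ) → ξ = 0) :
    ‖∫ g, U g ∂ν‖ < 1 := by
  have : ν.IsOpenPosMeasure := ⟨fun s hs hne => (hν s hs hne).ne'⟩
  let _ : InnerProductSpace ℝ H := InnerProductSpace.complexToReal
  exact norm_average_lt_one_of_no_invariant_vectors_general ν U
    (fun g => (CStarRing.norm_of_mem_unitary (hU_unitary g)).le) hU_cont hU_noinv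
end

section
/- Let G be a compact Hausdorff topological group with normalized Haar measure h, acting continuously on a compact Hausdorff space X. Let E : C(X,ℝ) → C(X,ℝ) be the G-invariant conditional expectation E(f)(x) = ∫_G f(g·x) dh(g). Let ν be a Borel probability measure on G with full support, and let P₁(f)(x) = ∫_G f(g·x) dν(g). Let P₂ : C(X,ℝ) → C(X,ℝ) be a positive unital bounded linear operator (f ≥ 0 implies P₂ f ≥ 0, and P₂ 1 = 1) that commutes with E, and let 0 < t < 1 and P = t·P₁ + (1−t)·P₂. Then every f ∈ C(X,ℝ) with P f = f is G-invariant: f(g·x) = f(x) for all g ∈ G and x ∈ X. -/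
open MeasureTheory

/-!
Write `P = t P₁ + (1 - t) P₂`. Since `E P₁ = E = P₁ E` and `P₂ E = E P₂`, the operator `P` commutes
with `E`, so `d = f - E f` is again fixed by `P`, and `E d = 0`. At a maximum point of `d` the value
of `P₂ d` is at most `max d`, so `P d = d` forces the `ν`-average of `d` along the orbit to be at
least `max d`: the maximum set is stable under the support of `ν`. Being closed, it is stable under
the closed semigroup generated by this support, which in a compact group is a group, hence all of
`G`. So `d` is constant on the orbit of a maximum point and `max d = E d = 0` there. The same
applies to `-d`, whence `f = E f`.
-/

section Topology

variable {G X : Type*} [Group G] [TopologicalSpace G] [IsTopologicalGroup G] [CompactSpace G]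
  [TopologicalSpace X] [MulAction G X] [ContinuousSMul G X]

lemma smul_mem_of_dense_subgroupClosure {s : Set G} (hs : Dense (Subgroup.closure s : Set G))
    {F : Set X} (hF : IsClosed F) (hsF : ∀ g ∈ s, ∀ x ∈ F, g • x ∈ F) (g : G) {x : X}
    (hx : x ∈ F) : g • x ∈ F := by
  have hsub : (Submonoid.closure s : Set G) ⊆ {g | g • x ∈ F} := fun g hg ↦ by
    induction hg using Submonoid.closure_induction_left with
    | one => simpa using hx
    | mul_left a ha b _ hb => simpa only [Set.mem_ofPred_eq, mul_smul] using hsF a ha _ hb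
  have hclosed : IsClosed {g : G | g • x ∈ F} := hF.preimage (by fun_prop)
  exact closure_minimal hsub hclosed (dense_submonoidClosure_iff_subgroupClosure.2 hs g)

end Topology

section Measure

lemma eq_of_mem_support_of_le_integral {α : Type*} [TopologicalSpace α] [MeasurableSpace α]
    {μ : Measure α} [IsProbabilityMeasure μ] {φ : α → ℝ} {c : ℝ} (hφ : Continuous φ)
    (hint : Integrable φ μ) (hle : ∀ a, φ a ≤ c) (hc : c ≤ ∫ a, φ a ∂μ) {a : α}
    (ha : a ∈ μ.support) : φ a = c := by
  have hint_le : ∫ a, φ a ∂μ ≤ c := by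
    simpa using integral_mono hint (integrable_const c) hle
  have hae : ∀ᵐ a ∂μ, φ a = c :=
    (integral_eq_iff_of_ae_le hint (integrable_const c) (.of_forall hle)).1
      (by simpa using hint_le.antisymm hc)
  exact Measure.support_subset_of_isClosed (isClosed_eq hφ continuous_const) hae ha

lemma isMulRightInvariant_of_compactSpace {G : Type*} [Group G] [TopologicalSpace G]
    [IsTopologicalGroup G] [CompactSpace G] [MeasurableSpace G] [BorelSpace G] (μ : Measure G)
    [IsFiniteMeasure μ] [μ.IsMulLeftInvariant] : μ.IsMulRightInvariant := by
  refine ⟨fun g ↦ ?_⟩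
  obtain rfl | hμ := eq_or_ne μ 0
  · simp
  have : μ.IsHaarMeasure := Measure.isHaarMeasure_of_isCompact_nonempty_interior μ Set.univ
    isCompact_univ (by simp) (by simpa using hμ) (measure_ne_top _ _)
  have hmap := Measure.isMulInvariant_eq_smul_of_compactSpace (μ.map (· * g)) μ
  have hfactor : Measure.haarScalarFactor (μ.map (· * g)) μ = 1 := by
    have hmass : μ Set.univ = Measure.haarScalarFactor (μ.map (· * g)) μ * μ Set.univ := by
      simpa [Measure.map_apply (measurable_mul_const g) .univ] using congrArg (· Set.univ) hmap
    exact_mod_cast (ENNReal.mul_eq_right (by simpa using hμ) (measure_ne_top _ _)).1 hmass.symm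
  rw [hmap, hfactor, one_smul]

end Measure

section OrbitAverage

variable {G X : Type*} [TopologicalSpace G] [CompactSpace G] [MeasurableSpace G]
  [OpensMeasurableSpace G] [TopologicalSpace X]

lemma integrable_apply_smul [SMul G X] [ContinuousSMul G X] (μ : Measure G) [IsFiniteMeasure μ]
    (f : C(X, ℝ)) (x : X) : Integrable (fun g : G ↦ f (g • x)) μ :=
  Continuous.integrable_of_hasCompactSupport (by fun_prop) (.of_compactSpace _)

/-- The operator `f ↦ ∫ g, f (g • ·) ∂μ` averaging continuous functions along the orbits of an
action: the paper's `P₁` for `μ = ν`, and its conditional expectation `E` for Haar measure. -/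
noncomputable def orbitAverage [SMul G X] [ContinuousSMul G X] (μ : Measure G)
    [IsFiniteMeasure μ] : C(X, ℝ) →ₗ[ℝ] C(X, ℝ) where
  toFun f :=
    { toFun x := ∫ g, f (g • x) ∂μ
      continuous_toFun := by
        rw [← continuousOn_univ]
        exact continuousOn_integral_of_compact_support isCompact_univ
          (Continuous.continuousOn (by fun_prop)) (by simp) }
  map_add' f₁ f₂ := ContinuousMap.ext fun x ↦
    integral_add (integrable_apply_smul μ f₁ x) (integrable_apply_smul μ f₂ x)
  map_smul' c f := ContinuousMap.ext fun x ↦ integral_const_mul c fun g ↦ f (g • x)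

lemma orbitAverage_apply [SMul G X] [ContinuousSMul G X] (μ : Measure G) [IsFiniteMeasure μ]
    (f : C(X, ℝ)) (x : X) : orbitAverage μ f x = ∫ g, f (g • x) ∂μ := rfl

lemma orbitAverage_apply_of_forall_smul_eq [SMul G X] [ContinuousSMul G X] (μ : Measure G)
    [IsProbabilityMeasure μ] {f : C(X, ℝ)} {x : X} (hf : ∀ g : G, f (g • x) = f x) :
    orbitAverage μ f x = f x := by
  simp [orbitAverage_apply, hf]

end OrbitAverage

section HaarAverage

variable {G X : Type*} [Group G] [TopologicalSpace G] [IsTopologicalGroup G] [CompactSpace G]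
  [MeasurableSpace G] [BorelSpace G] [TopologicalSpace X] [MulAction G X] [ContinuousSMul G X]

lemma orbitAverage_haar_apply_smul (h : Measure G) [IsFiniteMeasure h] [h.IsMulLeftInvariant]
    (f : C(X, ℝ)) (g : G) (x : X) : orbitAverage h f (g • x) = orbitAverage h f x := by
  have := isMulRightInvariant_of_compactSpace h
  simpa only [orbitAverage_apply, mul_smul] using
    integral_mul_right_eq_self (μ := h) (fun k ↦ f (k • x)) g

lemma orbitAverage_orbitAverage_haar (μ h : Measure G) [IsProbabilityMeasure μ] [IsFiniteMeasure h]
    [h.IsMulLeftInvariant] (f : C(X, ℝ)) :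
    orbitAverage μ (orbitAverage h f) = orbitAverage h f :=
  ContinuousMap.ext fun x ↦
    orbitAverage_apply_of_forall_smul_eq μ fun g ↦ orbitAverage_haar_apply_smul h f g x

lemma orbitAverage_haar_orbitAverage (h μ : Measure G) [IsFiniteMeasure h] [h.IsMulLeftInvariant]
    [IsProbabilityMeasure μ] (f : C(X, ℝ)) :
    orbitAverage h (orbitAverage μ f) = orbitAverage h f := by
  ext x
  have hleft (g : G) : ∫ k, f (g • k • x) ∂h = ∫ k, f (k • x) ∂h := by
    simpa only [mul_smul] using integral_mul_left_eq_self (μ := h) (fun k ↦ f (k • x)) g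
  calc ∫ k, ∫ g, f (g • k • x) ∂μ ∂h
      = ∫ g, ∫ k, f (g • k • x) ∂h ∂μ :=
        integral_integral_swap_of_hasCompactSupport (f := fun k g : G ↦ f (g • k • x))
          (by fun_prop) (.of_compactSpace _)
    _ = ∫ k, f (k • x) ∂h := by simp [hleft]

end HaarAverage

lemma positiveLinearMap_apply_le {X : Type*} [TopologicalSpace X] {Q : C(X, ℝ) →ₚ[ℝ] C(X, ℝ)}
    (hQ : Q 1 = 1) {d : C(X, ℝ)} {c : ℝ} (hd : ∀ x, d x ≤ c) (x : X) : Q d x ≤ c := by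
  have hle : d ≤ c • 1 := fun x ↦ by simpa using hd x
  simpa [hQ] using OrderHomClass.mono Q hle x

section Harmonic

variable {G X : Type*} [TopologicalSpace G] [CompactSpace G] [MeasurableSpace G]
  [OpensMeasurableSpace G] [TopologicalSpace X]

/-- The harmonic elements of `C(X, ℝ)`, i.e. the fixed points of the paper's operator
`P = t P₁ + (1 - t) P₂`, where `P₁` is the orbit average for `ν` and `P₂` is `Q`. -/
noncomputable def harmonicFunctions [SMul G X] [ContinuousSMul G X]
    (ν : Measure G) [IsFiniteMeasure ν] (Q : C(X, ℝ) →ₚ[ℝ] C(X, ℝ)) (t : ℝ) :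
    Submodule ℝ C(X, ℝ) :=
  LinearMap.eqLocus (t • orbitAverage ν + (1 - t) • Q.toLinearMap) LinearMap.id

lemma mem_harmonicFunctions [SMul G X] [ContinuousSMul G X]
    {ν : Measure G} [IsFiniteMeasure ν] {Q : C(X, ℝ) →ₚ[ℝ] C(X, ℝ)} {t : ℝ} {f : C(X, ℝ)} :
    f ∈ harmonicFunctions ν Q t ↔ t • orbitAverage ν f + (1 - t) • Q f = f := Iff.rfl

lemma apply_smul_eq_of_mem_support [SMul G X] [ContinuousSMul G X]
    {ν : Measure G} [IsProbabilityMeasure ν] {Q : C(X, ℝ) →ₚ[ℝ] C(X, ℝ)} (hQ : Q 1 = 1) {t : ℝ}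
    (ht0 : 0 < t) (ht1 : t ≤ 1) {d : C(X, ℝ)} (hd : d ∈ harmonicFunctions ν Q t) {c : ℝ}
    (hle : ∀ x, d x ≤ c) {x : X} (hx : d x = c) {g : G} (hg : g ∈ ν.support) :
    d (g • x) = c := by
  have hfix : t * orbitAverage ν d x + (1 - t) * Q d x = c :=
    (DFunLike.congr_fun (mem_harmonicFunctions.1 hd) x).trans hx
  have hQle : (1 - t) * Q d x ≤ (1 - t) * c :=
    mul_le_mul_of_nonneg_left (positiveLinearMap_apply_le hQ hle x) (sub_nonneg.2 ht1)
  have havg : c ≤ orbitAverage ν d x := le_of_mul_le_mul_left (by linarith) ht0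
  exact eq_of_mem_support_of_le_integral (φ := fun g : G ↦ d (g • x)) (by fun_prop)
    (integrable_apply_smul ν d x) (fun g ↦ hle (g • x)) havg hg

end Harmonic

section DenselyGenerated

variable {G X : Type*} [Group G] [TopologicalSpace G] [IsTopologicalGroup G] [CompactSpace G]
  [MeasurableSpace G] [OpensMeasurableSpace G] [TopologicalSpace X] [MulAction G X]
  [ContinuousSMul G X] {ν : Measure G} [IsProbabilityMeasure ν] {Q : C(X, ℝ) →ₚ[ℝ] C(X, ℝ)}
  {t : ℝ} {d : C(X, ℝ)}

lemma apply_smul_eq_of_dense_subgroupClosure_support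
    (hν : Dense (Subgroup.closure ν.support : Set G)) (hQ : Q 1 = 1) (ht0 : 0 < t) (ht1 : t ≤ 1)
    (hd : d ∈ harmonicFunctions ν Q t) {c : ℝ} (hle : ∀ x, d x ≤ c) {x : X} (hx : d x = c)
    (g : G) : d (g • x) = c :=
  smul_mem_of_dense_subgroupClosure hν (F := {x | d x = c})
    (isClosed_eq d.continuous continuous_const)
    (fun _ hg _ hx ↦ apply_smul_eq_of_mem_support hQ ht0 ht1 hd hle hx hg) g hx

lemma nonpos_of_mem_harmonicFunctions [CompactSpace X] (h : Measure G) [IsProbabilityMeasure h]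
    (hν : Dense (Subgroup.closure ν.support : Set G)) (hQ : Q 1 = 1) (ht0 : 0 < t) (ht1 : t ≤ 1)
    (hd : d ∈ harmonicFunctions ν Q t) (hd0 : orbitAverage h d = 0) : d ≤ 0 := by
  intro x
  obtain ⟨x₀, hx₀⟩ := d.continuous.exists_forall_ge' x (by simp)
  have hconst (g : G) : d (g • x₀) = d x₀ :=
    apply_smul_eq_of_dense_subgroupClosure_support hν hQ ht0 ht1 hd hx₀ rfl g
  calc d x ≤ d x₀ := hx₀ x
    _ = orbitAverage h d x₀ := (orbitAverage_apply_of_forall_smul_eq h hconst).symm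
    _ = 0 := by simp [hd0]

lemma eq_zero_of_mem_harmonicFunctions [CompactSpace X] (h : Measure G) [IsProbabilityMeasure h]
    (hν : Dense (Subgroup.closure ν.support : Set G)) (hQ : Q 1 = 1) (ht0 : 0 < t) (ht1 : t ≤ 1)
    (hd : d ∈ harmonicFunctions ν Q t) (hd0 : orbitAverage h d = 0) : d = 0 :=
  le_antisymm (nonpos_of_mem_harmonicFunctions h hν hQ ht0 ht1 hd hd0) <| neg_nonpos.1 <|
    nonpos_of_mem_harmonicFunctions h hν hQ ht0 ht1 (neg_mem hd) (by rw [map_neg, hd0, neg_zero])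

end DenselyGenerated

section Invariance

variable {G X : Type*} [Group G] [TopologicalSpace G] [IsTopologicalGroup G] [CompactSpace G]
  [MeasurableSpace G] [BorelSpace G] [TopologicalSpace X] [MulAction G X] [ContinuousSMul G X]
  {ν : Measure G} [IsProbabilityMeasure ν] {Q : C(X, ℝ) →ₚ[ℝ] C(X, ℝ)} {t : ℝ} {f : C(X, ℝ)}

lemma orbitAverage_haar_mem_harmonicFunctions (h : Measure G) [IsFiniteMeasure h]
    [h.IsMulLeftInvariant] (hcomm : Q (orbitAverage h f) = orbitAverage h (Q f))
    (hf : f ∈ harmonicFunctions ν Q t) : orbitAverage h f ∈ harmonicFunctions ν Q t := by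
  rw [mem_harmonicFunctions] at hf ⊢
  calc t • orbitAverage ν (orbitAverage h f) + (1 - t) • Q (orbitAverage h f)
      = t • orbitAverage h (orbitAverage ν f) + (1 - t) • orbitAverage h (Q f) := by
        rw [orbitAverage_orbitAverage_haar, orbitAverage_haar_orbitAverage, hcomm]
    _ = orbitAverage h (t • orbitAverage ν f + (1 - t) • Q f) := by simp only [map_add, map_smul]
    _ = orbitAverage h f := by rw [hf]

theorem harmonic_is_invariant_compact_group_action_general [CompactSpace X]
    (h : Measure G) [IsProbabilityMeasure h] [h.IsMulLeftInvariant]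
    (hν : Dense (Subgroup.closure ν.support : Set G)) (hQ : Q 1 = 1) (ht0 : 0 < t) (ht1 : t ≤ 1)
    (hcomm : Q (orbitAverage h f) = orbitAverage h (Q f))
    (hf : f ∈ harmonicFunctions ν Q t) (g : G) (x : X) : f (g • x) = f x := by
  have hd : f - orbitAverage h f ∈ harmonicFunctions ν Q t :=
    sub_mem hf (orbitAverage_haar_mem_harmonicFunctions h hcomm hf)
  have hd0 : orbitAverage h (f - orbitAverage h f) = 0 := by
    rw [map_sub, orbitAverage_orbitAverage_haar, sub_self]
  have hfE : f = orbitAverage h f :=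
    sub_eq_zero.1 (eq_zero_of_mem_harmonicFunctions h hν hQ ht0 ht1 hd hd0)
  rw [hfE]
  exact orbitAverage_haar_apply_smul h f g x

end Invariance

/-- Commutative case of the proposition on harmonic elements for actions of
compact (quantum) groups: let a compact group `G` with Haar probability
measure `h` act continuously on a compact Hausdorff space `X`, let
`E f x = ∫ f(g·x) dh(g)` be the invariant conditional expectation, let
`P₁ f x = ∫ f(g·x) dν(g)` for a fully supported Borel probability measure `ν`,
and let `P₂` be a positive unital bounded operator commuting with `E`. Then
every fixed point of `P = t P₁ + (1-t) P₂`, `0 < t < 1`, is `G`-invariant. -/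
theorem harmonic_is_invariant_compact_group_action
    {G X : Type*} [Group G] [TopologicalSpace G] [IsTopologicalGroup G]
    [CompactSpace G] [T2Space G] [MeasurableSpace G] [BorelSpace G]
    [TopologicalSpace X] [CompactSpace X] [T2Space X]
    [MulAction G X] [ContinuousSMul G X]
    (h : Measure G) [IsProbabilityMeasure h] [h.IsMulLeftInvariant]
    (ν : Measure G) [IsProbabilityMeasure ν]
    (hν : ∀ s : Set G, IsOpen s → s.Nonempty → 0 < ν s)
    (E P₁ P₂ : C(X, ℝ) →L[ℝ] C(X, ℝ))
    (hE : ∀ (f : C(X, ℝ)) (x : X), E f x = ∫ g, f (g • x) ∂h)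
    (hP₁ : ∀ (f : C(X, ℝ)) (x : X), P₁ f x = ∫ g, f (g • x) ∂ν)
    (hP₂_pos : ∀ f : C(X, ℝ), (∀ x, 0 ≤ f x) → ∀ x, 0 ≤ P₂ f x)
    (hP₂_one : P₂ 1 = 1)
    (hcomm : ∀ f : C(X, ℝ), P₂ (E f) = E (P₂ f))
    (t : ℝ) (ht0 : 0 < t) (ht1 : t < 1)
    (f : C(X, ℝ)) (hf : t • P₁ f + (1 - t) • P₂ f = f) :
    ∀ (g : G) (x : X), f (g • x) = f x := by
  have hE' (u : C(X, ℝ)) : E u = orbitAverage h u := ContinuousMap.ext (hE u)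
  have hP₁' (u : C(X, ℝ)) : P₁ u = orbitAverage ν u := ContinuousMap.ext (hP₁ u)
  have : ν.IsOpenPosMeasure := ⟨fun s hs hne ↦ (hν s hs hne).ne'⟩
  have hsupp : Dense (Subgroup.closure ν.support : Set G) := by simp [Measure.support_eq_univ]
  exact harmonic_is_invariant_compact_group_action_general h hsupp
    (Q := .mk₀ (P₂ : C(X, ℝ) →ₗ[ℝ] C(X, ℝ)) hP₂_pos) hP₂_one ht0 ht1.le
    (by simpa only [hE'] using! hcomm f) (mem_harmonicFunctions.2 (by rwa [hP₁'] at hf))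
end

section
/- Let Γ be a countable discrete group, N a finite normal subgroup, and μ a finitely supported, generating, transient probability measure on Γ with Green function G and Martin kernel K(x,y) = G(yx⁻¹)/G(y). Then the Martin kernel is asymptotically N-invariant: for every x ∈ Γ and every g ∈ N, the function y ↦ K(g·x, y) − K(x, y) vanishes at infinity, i.e. tends to 0 along the cofinite filter on Γ. -/
/-- A measure `μ` is transient if its Green function `∑_n μ^{*n}(x)` is finite
(i.e. the series is summable) at every point. -/
def IsTransient {G : Type*} [Group G] (μ : G → ℝ) : Prop :=
  ∀ x : G, Summable fun n => convPow μ n x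

/-- The Green function `G(x) = ∑_{n ≥ 0} μ^{*n}(x)`. -/
noncomputable def greenFn {G : Type*} [Group G] (μ : G → ℝ) : G → ℝ :=
  fun x => ∑' n, convPow μ n x

/-- The Martin kernel `K(x, y) = G(y x⁻¹) / G(y)`. -/
noncomputable def martinKernel {G : Type*} [Group G] (μ : G → ℝ) (x y : G) : ℝ :=
  greenFn μ (y * x⁻¹) / greenFn μ y

/-- The pushforward of a measure `μ` on `Γ` to the quotient group `Γ/N`:
`μ̄(c) = ∑_{x : π(x) = c} μ(x)`. -/
noncomputable def pushforward {Γ : Type*} [Group Γ] (N : Subgroup Γ) [N.Normal]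
    (μ : Γ → ℝ) : Γ ⧸ N → ℝ :=
  fun c => ∑' x : {x : Γ // (QuotientGroup.mk x : Γ ⧸ N) = c}, μ x

/-!
Let `G` be the Green function. Since `G = δ + G ∗ μ` and `μ` is finitely supported,
`G ∗ μ^{*n} = G` off a finite set for every `n`. A suitable average `σ` of convolution powers has
the same property and charges every point of `N`, say `σ = τ + ε 1_N` with `τ ≥ 0`. Let
`A = G ∗ 1_N` be the sum of `G` over `N`-cosets. Near infinity `G = G ∗ τ + ε A`, and hence, as `N`
is normal, `A ∗ τ = q A` with `q = 1 - ε |N| < 1`. The term `ε A` is `N`-invariant, so a bound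
`|G(zg) - G(z)| ≤ c A(z)` near infinity improves to `|G(zg) - G(z)| ≤ c q A(z)`. Iterating from
`c = 1` shows that `G(zg) - G(z)` is `o(A(z))`, and by the Harnack inequality
`G(z) μ^{*n}(v) ≤ G(zv)` the sum `A(z)` is `O(G(zx))` for every `x`.
-/

open Filter Asymptotics Topology
open Function (support)

section Convolution

theorem summable_mul_of_finite_support {α : Type*} (f : α → ℝ) {ν : α → ℝ}
    (hν : (support ν).Finite) : Summable fun s => f s * ν s :=
  summable_of_hasFiniteSupport (hν.subset (Function.support_mul_subset_right f ν))

variable {Γ : Type*} [Group Γ] {f g ν ρ : Γ → ℝ}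

theorem conv_apply (f ν : Γ → ℝ) (x : Γ) : conv f ν x = ∑' s, f (x * s⁻¹) * ν s := by
  rw [conv, ← (Equiv.divLeft x).tsum_eq]
  simp only [Equiv.divLeft_apply, div_eq_mul_inv, mul_inv_rev, inv_inv, inv_mul_cancel_right]

theorem conv_apply_eq_sum (f : Γ → ℝ) (hν : (support ν).Finite) (x : Γ) :
    conv f ν x = ∑ s ∈ hν.toFinset, f (x * s⁻¹) * ν s := by
  rw [conv_apply]
  refine tsum_eq_sum fun s hs => ?_
  rw [hν.mem_toFinset, Function.notMem_support] at hs
  rw [hs, mul_zero]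

theorem conv_nonneg (hf : 0 ≤ f) (hν : 0 ≤ ν) : 0 ≤ conv f ν :=
  fun _ => tsum_nonneg fun _ => mul_nonneg (hf _) (hν _)

theorem support_conv_finite (hf : (support f).Finite) (hν : (support ν).Finite) :
    (support (conv f ν)).Finite := by
  refine (hf.image2 (· * ·) hν).subset fun x hx => ?_
  rw [Function.mem_support, conv_apply_eq_sum f hν] at hx
  obtain ⟨s, -, hs⟩ := Finset.exists_ne_zero_of_sum_ne_zero hx
  exact ⟨x * s⁻¹, left_ne_zero_of_mul hs, s, right_ne_zero_of_mul hs, inv_mul_cancel_right x s⟩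

theorem conv_mono_left (hfg : f ≤ g) (hν : 0 ≤ ν) (hνfin : (support ν).Finite) :
    conv f ν ≤ conv g ν := fun x => by
  rw [conv_apply_eq_sum f hνfin, conv_apply_eq_sum g hνfin]
  exact Finset.sum_le_sum fun s _ => mul_le_mul_of_nonneg_right (hfg _) (hν s)

theorem mul_le_conv_apply (hf : 0 ≤ f) (hν : 0 ≤ ν) (hνfin : (support ν).Finite) (w v : Γ) :
    f w * ν v ≤ conv f ν (w * v) := by
  rw [conv_apply]
  simpa only [mul_inv_cancel_right] using
    (summable_mul_of_finite_support (fun s => f (w * v * s⁻¹)) hνfin).le_tsum v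
      fun s _ => mul_nonneg (hf _) (hν s)

theorem conv_smul_add_smul (f : Γ → ℝ) (hν : (support ν).Finite) (hρ : (support ρ).Finite)
    (a b : ℝ) : conv f (a • ν + b • ρ) = a • conv f ν + b • conv f ρ := by
  ext x
  have hsum {κ : Γ → ℝ} (hκ : (support κ).Finite) : Summable fun s => f (x * s⁻¹) * κ s :=
    summable_mul_of_finite_support (fun s => f (x * s⁻¹)) hκ
  simp only [Pi.add_apply, Pi.smul_apply, smul_eq_mul, conv_apply, mul_add, mul_left_comm _ a,
    mul_left_comm _ b]
  rw [((hsum hν).mul_left a).tsum_add ((hsum hρ).mul_left b), tsum_mul_left, tsum_mul_left]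

theorem conv_assoc (f : Γ → ℝ) (hν : (support ν).Finite) (hρ : (support ρ).Finite) :
    conv (conv f ν) ρ = conv f (conv ν ρ) := by
  ext x
  have hshift (t : Γ) :
      HasSum (fun r => f (x * r⁻¹) * ν (r * t⁻¹)) (conv f ν (x * t⁻¹)) := by
    rw [← (Equiv.mulRight t).hasSum_iff, conv_apply]
    simpa only [Function.comp_def, Equiv.coe_mulRight, mul_inv_rev, mul_inv_cancel_right,
      ← mul_assoc] using (summable_mul_of_finite_support (fun s => f (x * t⁻¹ * s⁻¹)) hν).hasSum
  have hsum := hasSum_sum fun t (_ : t ∈ hρ.toFinset) => (hshift t).mul_right (ρ t)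
  rw [conv_apply_eq_sum _ hρ, ← hsum.tsum_eq, conv_apply]
  simp only [conv_apply_eq_sum ν hρ, Finset.mul_sum, mul_assoc]

theorem conv_convPow_zero (f μ : Γ → ℝ) : conv f (convPow μ 0) = f := by
  ext x
  rw [conv_apply, tsum_eq_single 1 fun s hs => by simp [convPow, hs]]
  simp [convPow]

theorem convPow_nonneg {μ : Γ → ℝ} (hμ : 0 ≤ μ) : ∀ n, 0 ≤ convPow μ n
  | 0 => Set.indicator_nonneg fun _ _ => zero_le_one
  | n + 1 => conv_nonneg (convPow_nonneg hμ n) hμ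

theorem support_convPow_finite {μ : Γ → ℝ} (hμ : (support μ).Finite) :
    ∀ n, (support (convPow μ n)).Finite
  | 0 => (Set.finite_singleton 1).subset Set.support_indicator_subset
  | n + 1 => support_conv_finite (support_convPow_finite hμ n) hμ

theorem eventually_cofinite_mul_right {p : Γ → Prop} (hp : ∀ᶠ z in cofinite, p z) (a : Γ) :
    ∀ᶠ z in cofinite, p (z * a) :=
  (mul_left_injective a).tendsto_cofinite.eventually hp

theorem conv_eventuallyEq_of_eventuallyEq (hfg : f =ᶠ[cofinite] g) (hν : (support ν).Finite) :
    conv f ν =ᶠ[cofinite] conv g ν := by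
  have hshift : ∀ᶠ z in cofinite, ∀ s ∈ hν.toFinset, f (z * s⁻¹) = g (z * s⁻¹) := by
    rw [Finset.eventually_all]
    exact fun s _ => eventually_cofinite_mul_right hfg s⁻¹
  filter_upwards [hshift] with z hz
  rw [conv_apply_eq_sum f hν, conv_apply_eq_sum g hν]
  exact Finset.sum_congr rfl fun s hs => by rw [hz s hs]

end Convolution

section Harmonic

variable {Γ : Type*} [Group Γ] {F μ σ ρ : Γ → ℝ}

/-- The function `F` is harmonic near infinity for the finitely supported positive measure `σ`,
of arbitrary total mass: `F ∗ σ = F` off a finite set. -/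
structure IsHarmonicNearInfinity (F σ : Γ → ℝ) : Prop where
  nonneg : 0 ≤ σ
  finite_support : (support σ).Finite
  conv_eventuallyEq : conv F σ =ᶠ[cofinite] F

namespace IsHarmonicNearInfinity

protected theorem conv (hσ : IsHarmonicNearInfinity F σ) (hρ : IsHarmonicNearInfinity F ρ) :
    IsHarmonicNearInfinity F (conv σ ρ) where
  nonneg := conv_nonneg hσ.nonneg hρ.nonneg
  finite_support := support_conv_finite hσ.finite_support hρ.finite_support
  conv_eventuallyEq := by
    rw [← conv_assoc F hσ.finite_support hρ.finite_support]
    exact (conv_eventuallyEq_of_eventuallyEq hσ.conv_eventuallyEq hρ.finite_support).trans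
      hρ.conv_eventuallyEq

protected theorem convPow (hμ : IsHarmonicNearInfinity F μ) :
    ∀ n, IsHarmonicNearInfinity F (convPow μ n)
  | 0 => ⟨convPow_nonneg hμ.nonneg 0, support_convPow_finite hμ.finite_support 0,
      .of_eq (conv_convPow_zero F μ)⟩
  | n + 1 => (hμ.convPow n).conv hμ

theorem convex (F : Γ → ℝ) : Convex ℝ {σ | IsHarmonicNearInfinity F σ} := by
  intro σ hσ ρ hρ a b ha hb hab
  refine ⟨add_nonneg (smul_nonneg ha hσ.nonneg) (smul_nonneg hb hρ.nonneg),
    (hσ.finite_support.union hρ.finite_support).subset ((Function.support_add _ _).trans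
      (Set.union_subset_union (Function.support_const_smul_subset a σ)
        (Function.support_const_smul_subset b ρ))), ?_⟩
  rw [conv_smul_add_smul F hσ.finite_support hρ.finite_support]
  filter_upwards [hσ.conv_eventuallyEq, hρ.conv_eventuallyEq] with z hσz hρz
  rw [Pi.add_apply, Pi.smul_apply, Pi.smul_apply, hσz, hρz, ← add_smul, hab, one_smul]

theorem exists_forall_pos {ι : Type*} [Finite ι] [Nonempty ι] {a : ι → Γ}
    (h : ∀ i, ∃ σ, IsHarmonicNearInfinity F σ ∧ 0 < σ (a i)) :
    ∃ σ, IsHarmonicNearInfinity F σ ∧ ∀ i, 0 < σ (a i) := by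
  cases nonempty_fintype ι
  choose σ hσ hpos using h
  have hcard : (0 : ℝ) < (Fintype.card ι : ℝ)⁻¹ := inv_pos.2 (Nat.cast_pos.2 Fintype.card_pos)
  refine ⟨∑ i, (Fintype.card ι : ℝ)⁻¹ • σ i,
    (convex F).sum_mem (fun _ _ => hcard.le) (by simp) fun i _ => hσ i, fun i => ?_⟩
  rw [Finset.sum_apply]
  exact Finset.sum_pos' (fun j _ => mul_nonneg hcard.le ((hσ j).nonneg _))
    ⟨i, Finset.mem_univ i, mul_pos hcard (hpos i)⟩

end IsHarmonicNearInfinity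

end Harmonic

section CosetSum

variable {Γ : Type*} [Group Γ] {N : Subgroup Γ} [Fintype N] {F τ : Γ → ℝ} {c ε : ℝ}

/-- The sum of `F` over the coset `zN`, as a function of `z`; equivalently `F ∗ 1_N`. -/
def cosetSum (N : Subgroup Γ) [Fintype N] (F : Γ → ℝ) (z : Γ) : ℝ :=
  ∑ u : N, F (z * u)

theorem cosetSum_nonneg (hF : 0 ≤ F) (z : Γ) : 0 ≤ cosetSum N F z :=
  Finset.sum_nonneg fun _ _ => hF _

theorem le_cosetSum (hF : 0 ≤ F) (z : Γ) (u : N) : F (z * u) ≤ cosetSum N F z :=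
  Finset.single_le_sum (f := fun u : N => F (z * u)) (fun _ _ => hF _) (Finset.mem_univ u)

theorem cosetSum_mul_coe (F : Γ → ℝ) (z : Γ) (g : N) :
    cosetSum N F (z * g) = cosetSum N F z :=
  Fintype.sum_equiv (Equiv.mulLeft g) _ _ fun u => by simp [mul_assoc]

theorem conv_indicator_subgroup (F : Γ → ℝ) :
    conv F ((N : Set Γ).indicator 1) = cosetSum N F := by
  ext z
  calc conv F ((N : Set Γ).indicator 1) z
      = ∑' s, (N : Set Γ).indicator (fun s => F (z * s⁻¹)) s := by
        rw [conv_apply]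
        refine tsum_congr fun s => ?_
        by_cases hs : s ∈ (N : Set Γ) <;> simp [hs]
    _ = ∑ u : N, F (z * (u : Γ)⁻¹) := by
        rw [← tsum_subtype (N : Set Γ) fun s => F (z * s⁻¹)]
        exact tsum_fintype _
    _ = cosetSum N F z := Fintype.sum_equiv (Equiv.inv N) _ _ fun u => by simp

theorem cosetSum_conv [N.Normal] (F : Γ → ℝ) (hτ : (support τ).Finite) :
    cosetSum N (conv F τ) = conv (cosetSum N F) τ := by
  ext z
  have hconj (s : Γ) : ∑ u : N, F (z * u * s⁻¹) = cosetSum N F (z * s⁻¹) :=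
    Fintype.sum_equiv (MulAut.conjNormal s).toEquiv _ _ fun u => by simp [mul_assoc]
  simp only [cosetSum, conv_apply_eq_sum _ hτ]
  rw [Finset.sum_comm]
  exact Finset.sum_congr rfl fun s _ => by rw [← Finset.sum_mul, hconj, cosetSum]

theorem conv_cosetSum_eventuallyEq [N.Normal] (hτ : (support τ).Finite)
    (hF : F =ᶠ[cofinite] conv F τ + ε • cosetSum N F) :
    conv (cosetSum N F) τ =ᶠ[cofinite] (1 - ε * Fintype.card N) • cosetSum N F := by
  have hcoset : ∀ᶠ z in cofinite, ∀ u : N, F (z * u) = (conv F τ + ε • cosetSum N F) (z * u) :=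
    eventually_all.2 fun u => eventually_cofinite_mul_right hF (u : Γ)
  filter_upwards [hcoset] with z hz
  have hsum : cosetSum N F z =
      conv (cosetSum N F) τ z + Fintype.card N * (ε * cosetSum N F z) := by
    calc cosetSum N F z
        = ∑ u : N, (conv F τ (z * u) + ε * cosetSum N F (z * u)) :=
          Finset.sum_congr rfl fun u _ => hz u
      _ = cosetSum N (conv F τ) z + Fintype.card N * (ε * cosetSum N F z) := by
          simp only [cosetSum_mul_coe, Finset.sum_add_distrib, Finset.sum_const, Finset.card_univ,
            nsmul_eq_mul]
          rfl
      _ = conv (cosetSum N F) τ z + Fintype.card N * (ε * cosetSum N F z) := by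
          rw [cosetSum_conv F hτ]
  rw [Pi.smul_apply, smul_eq_mul]
  linarith

theorem abs_conv_mul_coe_sub_le [N.Normal] (hτ0 : 0 ≤ τ) (hτ : (support τ).Finite) {z : Γ}
    (hz : ∀ s ∈ hτ.toFinset, ∀ g : N,
      |F (z * s⁻¹ * g) - F (z * s⁻¹)| ≤ c * cosetSum N F (z * s⁻¹)) (g : N) :
    |conv F τ (z * g) - conv F τ z| ≤ c * conv (cosetSum N F) τ z := by
  rw [conv_apply_eq_sum F hτ, conv_apply_eq_sum F hτ, conv_apply_eq_sum _ hτ,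
    ← Finset.sum_sub_distrib, Finset.mul_sum]
  refine (Finset.abs_sum_le_sum_abs _ _).trans (Finset.sum_le_sum fun s hs => ?_)
  have hconj : z * s⁻¹ * (MulAut.conjNormal s g : N) = z * g * s⁻¹ := by
    simp [mul_assoc]
  rw [← sub_mul, abs_mul, abs_of_nonneg (hτ0 s), ← mul_assoc, ← hconj]
  exact mul_le_mul_of_nonneg_right (hz s hs _) (hτ0 s)

theorem eventually_abs_sub_le_mul [N.Normal] (hτ0 : 0 ≤ τ) (hτ : (support τ).Finite)
    (hF : F =ᶠ[cofinite] conv F τ + ε • cosetSum N F)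
    (hc : ∀ᶠ z in cofinite, ∀ g : N, |F (z * g) - F z| ≤ c * cosetSum N F z) :
    ∀ᶠ z in cofinite, ∀ g : N,
      |F (z * g) - F z| ≤ c * (1 - ε * Fintype.card N) * cosetSum N F z := by
  have hshift : ∀ᶠ z in cofinite, ∀ s ∈ hτ.toFinset, ∀ g : N,
      |F (z * s⁻¹ * g) - F (z * s⁻¹)| ≤ c * cosetSum N F (z * s⁻¹) := by
    rw [Finset.eventually_all]
    exact fun s _ => eventually_cofinite_mul_right hc s⁻¹
  have hcoset : ∀ᶠ z in cofinite, ∀ g : N, F (z * g) = (conv F τ + ε • cosetSum N F) (z * g) :=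
    eventually_all.2 fun g => eventually_cofinite_mul_right hF (g : Γ)
  filter_upwards [hshift, hcoset, hF, conv_cosetSum_eventuallyEq hτ hF] with z hz hzN hz1 hq g
  calc |F (z * g) - F z| = |conv F τ (z * g) - conv F τ z| := by
        rw [hzN g, hz1]
        simp only [Pi.add_apply, Pi.smul_apply, cosetSum_mul_coe, add_sub_add_right_eq_sub]
    _ ≤ c * conv (cosetSum N F) τ z := abs_conv_mul_coe_sub_le hτ0 hτ hz g
    _ = c * (1 - ε * Fintype.card N) * cosetSum N F z := by
        rw [hq, Pi.smul_apply, smul_eq_mul, mul_assoc]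

theorem eventually_abs_sub_le_pow [N.Normal] (hF0 : 0 ≤ F) (hτ0 : 0 ≤ τ)
    (hτ : (support τ).Finite) (hF : F =ᶠ[cofinite] conv F τ + ε • cosetSum N F) (k : ℕ) :
    ∀ᶠ z in cofinite, ∀ g : N,
      |F (z * g) - F z| ≤ (1 - ε * Fintype.card N) ^ k * cosetSum N F z := by
  induction k with
  | zero =>
    refine .of_forall fun z g => ?_
    have hz : F z ≤ cosetSum N F z := by simpa using le_cosetSum hF0 z (1 : N)
    simpa using abs_sub_le_of_nonneg_of_le (hF0 _) (le_cosetSum hF0 z g) (hF0 z) hz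
  | succ k ih =>
    simpa only [pow_succ] using eventually_abs_sub_le_mul hτ0 hτ hF ih

theorem IsHarmonicNearInfinity.exists_minorization {σ : Γ → ℝ} (hσ : IsHarmonicNearInfinity F σ)
    (hpos : ∀ u : N, 0 < σ u) :
    ∃ ε : ℝ, 0 < ε ∧ ∃ τ : Γ → ℝ, 0 ≤ τ ∧ (support τ).Finite ∧
      F =ᶠ[cofinite] conv F τ + ε • cosetSum N F := by
  obtain ⟨u₀, hmin⟩ := Finite.exists_min fun u : N => σ u
  have hN : (support ((N : Set Γ).indicator (1 : Γ → ℝ))).Finite :=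
    (Set.toFinite (N : Set Γ)).subset Set.support_indicator_subset
  have hτ : (support (σ - σ u₀ • (N : Set Γ).indicator 1)).Finite :=
    (hσ.finite_support.union hN).subset ((Function.support_sub _ _).trans
      (Set.union_subset_union_right _ (Function.support_const_smul_subset (σ u₀) _)))
  refine ⟨σ u₀, hpos u₀, σ - σ u₀ • (N : Set Γ).indicator 1, fun s => ?_, hτ, ?_⟩
  · by_cases hs : s ∈ N
    · simpa [hs] using hmin ⟨s, hs⟩
    · simpa [hs] using hσ.nonneg s
  · have hsplit := conv_smul_add_smul F hτ hN 1 (σ u₀)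
    rw [one_smul, one_smul, sub_add_cancel, conv_indicator_subgroup] at hsplit
    exact hsplit ▸ hσ.conv_eventuallyEq.symm

theorem IsHarmonicNearInfinity.sub_isLittleO_cosetSum [N.Normal] {σ : Γ → ℝ} (hF : 0 ≤ F)
    (hσ : IsHarmonicNearInfinity F σ) (hpos : ∀ u : N, 0 < σ u) (g : N) :
    (fun z => F (z * g) - F z) =o[cofinite] cosetSum N F := by
  obtain ⟨ε, hε, τ, hτ0, hτ, hFτ⟩ := hσ.exists_minorization hpos
  have hq : 1 - ε * Fintype.card N < 1 :=
    sub_lt_self 1 (mul_pos hε (Nat.cast_pos.2 Fintype.card_pos))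
  refine isLittleO_iff.2 fun δ hδ => ?_
  obtain ⟨k, hk⟩ := exists_pow_lt_of_lt_one hδ hq
  filter_upwards [eventually_abs_sub_le_pow hF hτ0 hτ hFτ k] with z hz
  rw [Real.norm_eq_abs, Real.norm_of_nonneg (cosetSum_nonneg hF z)]
  exact (hz g).trans (mul_le_mul_of_nonneg_right hk.le (cosetSum_nonneg hF z))

end CosetSum

section Green

variable {Γ : Type*} [Group Γ] {μ : Γ → ℝ}

theorem greenFn_nonneg (hμ : 0 ≤ μ) : 0 ≤ greenFn μ :=
  fun x => tsum_nonneg fun n => convPow_nonneg hμ n x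

theorem greenFn_eq_convPow_zero_add_conv (hμ : (support μ).Finite) (htrans : IsTransient μ) :
    greenFn μ = convPow μ 0 + conv (greenFn μ) μ := by
  ext z
  have hsum := hasSum_sum fun s (_ : s ∈ hμ.toFinset) =>
    (htrans (z * s⁻¹)).hasSum.mul_right (μ s)
  rw [greenFn, (htrans z).tsum_eq_zero_add, Pi.add_apply, conv_apply_eq_sum _ hμ]
  simp only [convPow, conv_apply_eq_sum _ hμ]
  rw [hsum.tsum_eq]
  rfl

theorem isHarmonicNearInfinity_greenFn (hμ0 : 0 ≤ μ) (hμ : (support μ).Finite)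
    (htrans : IsTransient μ) : IsHarmonicNearInfinity (greenFn μ) μ where
  nonneg := hμ0
  finite_support := hμ
  conv_eventuallyEq := by
    filter_upwards [(Set.finite_singleton (1 : Γ)).compl_mem_cofinite] with z hz
    have hδ : convPow μ 0 z = 0 := Set.indicator_of_notMem hz _
    conv_rhs => rw [greenFn_eq_convPow_zero_add_conv hμ htrans, Pi.add_apply, hδ, zero_add]

theorem conv_greenFn_convPow_le (hμ0 : 0 ≤ μ) (hμ : (support μ).Finite)
    (htrans : IsTransient μ) (n : ℕ) : conv (greenFn μ) (convPow μ n) ≤ greenFn μ := by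
  induction n with
  | zero => exact (conv_convPow_zero _ μ).le
  | succ n ih =>
    calc conv (greenFn μ) (convPow μ (n + 1))
        = conv (conv (greenFn μ) (convPow μ n)) μ :=
          (conv_assoc _ (support_convPow_finite hμ n) hμ).symm
      _ ≤ conv (greenFn μ) μ := conv_mono_left ih hμ0 hμ
      _ ≤ convPow μ 0 + conv (greenFn μ) μ := le_add_of_nonneg_left (convPow_nonneg hμ0 0)
      _ = greenFn μ := (greenFn_eq_convPow_zero_add_conv hμ htrans).symm

theorem greenFn_isBigO_mul_right (hμ0 : 0 ≤ μ) (hμ : (support μ).Finite)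
    (hgen : IsGenerating μ) (htrans : IsTransient μ) (v : Γ) :
    greenFn μ =O[⊤] fun w => greenFn μ (w * v) := by
  obtain ⟨n, -, hn⟩ := hgen v
  refine .of_bound (convPow μ n v)⁻¹ (.of_forall fun w => ?_)
  have hG := greenFn_nonneg hμ0
  have hharnack : greenFn μ w * convPow μ n v ≤ greenFn μ (w * v) :=
    (mul_le_conv_apply hG (convPow_nonneg hμ0 n) (support_convPow_finite hμ n) w v).trans
      (conv_greenFn_convPow_le hμ0 hμ htrans n _)
  rwa [Real.norm_of_nonneg (hG w), Real.norm_of_nonneg (hG (w * v)), le_inv_mul_iff₀' hn]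

theorem cosetSum_greenFn_isBigO (N : Subgroup Γ) [Fintype N] (hμ0 : 0 ≤ μ)
    (hμ : (support μ).Finite) (hgen : IsGenerating μ) (htrans : IsTransient μ) (x : Γ) :
    cosetSum N (greenFn μ) =O[⊤] fun z => greenFn μ (z * x) := by
  refine IsBigO.fun_sum fun u _ => ?_
  have hu := (greenFn_isBigO_mul_right hμ0 hμ hgen htrans ((u : Γ)⁻¹ * x)).comp_tendsto
    (tendsto_top : Tendsto (· * (u : Γ)) ⊤ ⊤)
  simpa only [Function.comp_def, mul_assoc, mul_inv_cancel_left] using hu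

end Green

theorem martin_kernel_asymptotically_invariant_general
    {Γ : Type*} [Group Γ] (N : Subgroup Γ) [N.Normal] [Finite N]
    (μ : Γ → ℝ) (hμ0 : 0 ≤ μ) (hfin : (support μ).Finite)
    (hgen : IsGenerating μ) (htrans : IsTransient μ) (x g : Γ) (hg : g ∈ N) :
    Tendsto (fun y => martinKernel μ (g * x) y - martinKernel μ x y) cofinite (𝓝 0) := by
  cases nonempty_fintype N
  have hharm := isHarmonicNearInfinity_greenFn hμ0 hfin htrans
  obtain ⟨σ, hσ, hpos⟩ := IsHarmonicNearInfinity.exists_forall_pos fun u : N =>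
    let ⟨n, _, hn⟩ := hgen u
    ⟨convPow μ n, hharm.convPow n, hn⟩
  have hlittle : (fun z => greenFn μ (z * g⁻¹) - greenFn μ z) =o[cofinite]
      fun z => greenFn μ (z * x) :=
    (hσ.sub_isLittleO_cosetSum (greenFn_nonneg hμ0) hpos ⟨g⁻¹, N.inv_mem hg⟩).trans_isBigO
      ((cosetSum_greenFn_isBigO N hμ0 hfin hgen htrans x).mono le_top)
  have hlim :=
    (hlittle.comp_tendsto (mul_left_injective x⁻¹).tendsto_cofinite).tendsto_div_nhds_zero
  simpa only [martinKernel, Function.comp_def, mul_inv_rev, ← mul_assoc, inv_mul_cancel_right,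
    ← sub_div] using hlim

/-- For a finitely supported, generating, transient probability measure `μ` on
a countable group `Γ` with finite normal subgroup `N`, the Martin kernel is
asymptotically `N`-invariant: for every `x ∈ Γ` and `g ∈ N`, the function
`y ↦ K(g x, y) - K(x, y)` vanishes at infinity. -/
theorem martin_kernel_asymptotically_invariant
    {Γ : Type*} [Group Γ] [Countable Γ]
    (N : Subgroup Γ) [N.Normal] [Finite N]
    (μ : Γ → ℝ) (hμ0 : ∀ x, 0 ≤ μ x) (hμ1 : HasSum μ 1)
    (hfin : (Function.support μ).Finite)
    (hgen : IsGenerating μ) (htrans : IsTransient μ) :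
    ∀ x : Γ, ∀ g ∈ N,
      Filter.Tendsto (fun y : Γ => martinKernel μ (g * x) y - martinKernel μ x y)
        Filter.cofinite (nhds 0) :=
  martin_kernel_asymptotically_invariant_general N μ hμ0 hfin hgen htrans
end
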